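/- Every simple graph with maximum degree Δ admits a proper edge coloring using at most Δ + 1 colors. -/

import Mathlib

namespace VizingAux

open Classical in
/-- The relation of being joined by an alternating path of two partial matchings. -/
def Conn {V : Type*} (p q : V → V) : V → V → Prop :=
  Relation.ReflTransGen (fun u v => v = p u ∨ v = q u)

theorem Conn.symm' {V : Type*} {p q : V → V} (hp : ∀ v, p (p v) = v) (hq : ∀ v, q (q v) = v)
    {u v : V} (h : Conn p q u v) : Conn p q v u := by
  induction h with
  | refl => exact Relation.ReflTransGen.refl
  | tail _ hbc ih =>
    refine Relation.ReflTransGen.head ?_ ih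
    rcases hbc with rfl | rfl
    · left; rw [hp]
    · right; rw [hq]

theorem conn_zpow {V : Type*} (p q : Equiv.Perm V) (hp : ∀ v, p (p v) = v)
    (hq : ∀ v, q (q v) = v) {u v : V} (hu : q u = u) (h : Conn p q u v) :
    ∃ n : ℤ, v = ((p * q) ^ n) u := by
  have hpp : p * p = 1 := Equiv.ext hp
  have hqq : q * q = 1 := Equiv.ext hq
  have hpi : p⁻¹ = p := inv_eq_of_mul_eq_one_left hpp
  have hqi : q⁻¹ = q := inv_eq_of_mul_eq_one_left hqq
  have hc : ∀ n : ℤ, q * (p * q) ^ n = (p * q) ^ (-n) * q := by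
    intro n
    have h1 : q * (p * q) ^ n * q⁻¹ = (q * (p * q) * q⁻¹) ^ n := (conj_zpow).symm
    have h2 : q * (p * q) * q⁻¹ = (p * q)⁻¹ := by
      rw [mul_inv_rev, hpi, hqi, mul_assoc, mul_assoc, hqq, mul_one]
    rw [h2, inv_zpow, ← zpow_neg] at h1
    rw [← h1]; group
  induction h with
  | refl => exact ⟨0, by simp⟩
  | tail _ hbc ih =>
    obtain ⟨n, rfl⟩ := ih
    have hqn : q (((p * q) ^ n) u) = ((p * q) ^ (-n)) u := by
      have := congrArg (fun e : Equiv.Perm V => e u) (hc n)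
      simpa [hu] using this
    rcases hbc with rfl | rfl
    · refine ⟨-n + 1, ?_⟩
      have h3 : p (((p * q) ^ n) u) = (p * q) (q (((p * q) ^ n) u)) := by
        simp [hq]
      rw [h3, hqn, add_comm, zpow_add]; simp
    · exact ⟨-n, hqn⟩

theorem zpow_fix {V : Type*} (p q : Equiv.Perm V) (hp : ∀ v, p (p v) = v)
    (hq : ∀ v, q (q v) = v) {u : V} (hu : q u = u) (n : ℤ)
    (hn : q (((p * q) ^ n) u) = ((p * q) ^ n) u) : ((p * q) ^ (2 * n)) u = u := by
  have hpp : p * p = 1 := Equiv.ext hp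
  have hqq : q * q = 1 := Equiv.ext hq
  have hpi : p⁻¹ = p := inv_eq_of_mul_eq_one_left hpp
  have hqi : q⁻¹ = q := inv_eq_of_mul_eq_one_left hqq
  have hc : q * (p * q) ^ n = (p * q) ^ (-n) * q := by
    have h1 : q * (p * q) ^ n * q⁻¹ = (q * (p * q) * q⁻¹) ^ n := (conj_zpow).symm
    have h2 : q * (p * q) * q⁻¹ = (p * q)⁻¹ := by
      rw [mul_inv_rev, hpi, hqi, mul_assoc, mul_assoc, hqq, mul_one]
    rw [h2, inv_zpow, ← zpow_neg] at h1
    rw [← h1]; group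
  have h4 := congrArg (fun e : Equiv.Perm V => e u) hc
  simp only [Equiv.Perm.mul_apply, hu] at h4
  rw [hn] at h4
  rw [two_mul, zpow_add, Equiv.Perm.mul_apply, h4, ← Equiv.Perm.mul_apply, ← zpow_add]
  simp

theorem no_three {V : Type*} {p q : V → V} (hp : ∀ v, p (p v) = v)
    (hq : ∀ v, q (q v) = v) {u v w : V} (hu : q u = u) (hv : q v = v) (hw : q w = w)
    (huv : u ≠ v) (huw : u ≠ w) (hvw : v ≠ w) (h1 : Conn p q u v) (h2 : Conn p q u w) :
    False := by
  obtain ⟨P, rfl⟩ : ∃ P : Equiv.Perm V, (P : V → V) = p := ⟨⟨p, p, hp, hp⟩, rfl⟩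
  obtain ⟨Q, rfl⟩ : ∃ Q : Equiv.Perm V, (Q : V → V) = q := ⟨⟨q, q, hq, hq⟩, rfl⟩
  obtain ⟨m, rfl⟩ := conn_zpow P Q hp hq hu h1
  obtain ⟨n, rfl⟩ := conn_zpow P Q hp hq hu h2
  have hm := zpow_fix P Q hp hq hu m hv
  have hn := zpow_fix P Q hp hq hu n hw
  have key : ∀ k : ℤ, ((P * Q) ^ k) u = u ↔
      (Function.minimalPeriod (fun x => (P * Q) x) u : ℤ) ∣ k := by
    intro k
    exact MulAction.zpow_smul_eq_iff_minimalPeriod_dvd (a := P * Q) (b := u) (n := k)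
  generalize (Function.minimalPeriod (fun x => (P * Q) x) u : ℤ) = d at key
  rw [key] at hm hn
  have hm' : ¬ d ∣ m := fun h => huv ((key m).2 h).symm
  have hn' : ¬ d ∣ n := fun h => huw ((key n).2 h).symm
  have hmn : ¬ d ∣ (m - n) := by
    intro h
    have h5 := (key _).2 h
    apply hvw
    have h6 : ((P * Q) ^ (n + (m - n))) u = ((P * Q) ^ n) u := by
      rw [zpow_add, Equiv.Perm.mul_apply, h5]
    rw [← h6]; congr 2; ring
  obtain ⟨s, hs⟩ := hm
  obtain ⟨t, ht⟩ := hn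
  rcases Int.even_or_odd' s with ⟨s', rfl | rfl⟩
  · exact hm' ⟨s', by linarith⟩
  rcases Int.even_or_odd' t with ⟨t', rfl | rfl⟩
  · exact hn' ⟨t', by linarith⟩
  exact hmn ⟨s' - t', by linarith⟩

/-- `D` encodes a proper edge coloring of `G[S]`: `D a v` is the other end of the edge of
color `a` at `v`, and `D a v = v` if there is no such edge. -/
structure Col {V C : Type*} (G : SimpleGraph V) (S : Finset V) (D : C → V → V) : Prop where
  inv : ∀ a v, D a (D a v) = v
  mem : ∀ a v, D a v ≠ v → v ∈ S
  adj : ∀ a v, D a v ≠ v → G.Adj v (D a v)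
  uniq : ∀ a b v, D a v ≠ v → D a v = D b v → a = b
  full : ∀ v w, v ∈ S → w ∈ S → G.Adj v w → ∃ a, D a v = w

/-- A partial assignment of distinct colors to the edges from a new vertex to `N`. -/
structure PM {V C : Type*} (N : Set V) (D : C → V → V) (φ : V → Option C) : Prop where
  mem : ∀ w a, φ w = some a → w ∈ N
  mis : ∀ w a, φ w = some a → D a w = w
  inj : ∀ v w a, φ v = some a → φ w = some a → v = w

/-- The set of colors used. -/
def used {V C : Type*} (φ : V → Option C) : Set C := {a | ∃ v, φ v = some a}

open Classical in
/-- Kempe swap on a set `K`. -/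
noncomputable def swapD {V C : Type*} (D : C → V → V) (α β : C) (K : Set V) : C → V → V :=
  fun a v => if v ∈ K then D (Equiv.swap α β a) v else D a v

theorem Col.kempe {V C : Type*} {G : SimpleGraph V} {S : Finset V} {D : C → V → V}
    (h : Col G S D) (α β : C) (K : Set V) (hα : ∀ v, v ∈ K ↔ D α v ∈ K)
    (hβ : ∀ v, v ∈ K ↔ D β v ∈ K) (hne : α ≠ β) : Col G S (swapD D α β K) := by
  classical
  have e1 : ∀ v, v ∈ K → swapD D α β K α v = D β v := by intro v hv; simp [VizingAux.swapD, hv]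
  have e2 : ∀ v, v ∈ K → swapD D α β K β v = D α v := by intro v hv; simp [VizingAux.swapD, hv]
  have e3 : ∀ a v, v ∉ K → swapD D α β K a v = D a v := by
    intro a v hv; simp [VizingAux.swapD, hv]
  have e4 : ∀ a v, a ≠ α → a ≠ β → swapD D α β K a v = D a v := by
    intro a v h1 h2; simp [VizingAux.swapD, Equiv.swap_apply_of_ne_of_ne h1 h2]
  have e5 : ∀ a v, ∃ b, swapD D α β K a v = D b v := by
    intro a v
    by_cases hv : v ∈ K
    · exact ⟨Equiv.swap α β a, by simp [VizingAux.swapD, hv]⟩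
    · exact ⟨a, e3 a v hv⟩
  refine ⟨?_, ?_, ?_, ?_, ?_⟩
  · intro a v
    have := h.inv
    by_cases hv : v ∈ K <;> by_cases h1 : a = α <;> by_cases h2 : a = β <;> grind
  · intro a v hv
    obtain ⟨b, hb⟩ := e5 a v
    rw [hb] at hv
    exact h.mem b v hv
  · intro a v hv
    obtain ⟨b, hb⟩ := e5 a v
    rw [hb] at hv ⊢
    exact h.adj b v hv
  · intro a b v h1 h2
    by_cases hv : v ∈ K
    · simp only [VizingAux.swapD, hv, if_true] at h1 h2
      exact (Equiv.swap α β).injective (h.uniq _ _ v h1 h2)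
    · rw [e3 _ _ hv] at h1 h2
      rw [e3 _ _ hv] at h2
      exact h.uniq _ _ v h1 h2
  · intro v w hv hw hvw
    obtain ⟨a, ha⟩ := h.full v w hv hw hvw
    by_cases hvK : v ∈ K
    · exact ⟨Equiv.swap α β a, by simp [VizingAux.swapD, hvK, ha]⟩
    · exact ⟨a, by rw [e3 _ _ hvK, ha]⟩

open Classical in
/-- States reachable by rotating. -/
inductive St {V C : Type*} (D : C → V → V) (φ : V → Option C) (f : V) :
    (V → Option C) → V → Prop
  | base : St D φ f φ f
  | step (ψ : V → Option C) (g h : V) (a : C) : St D φ f ψ g → D a g = g → ψ h = some a →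
      St D φ f (Function.update (Function.update ψ g (some a)) h none) h

theorem St.inv {V C : Type*} {N : Set V} {D : C → V → V} {φ : V → Option C} {f : V}
    (hφ : PM N D φ) (hf : f ∈ N) (hff : φ f = none) {ψ : V → Option C} {g : V}
    (h : St D φ f ψ g) : PM N D ψ ∧ g ∈ N ∧ ψ g = none ∧ used ψ = used φ := by
  classical
  induction h with
  | base => exact ⟨hφ, hf, hff, rfl⟩
  | step ψ g h a hs ha hh ih =>
    obtain ⟨i1, i2, i3, i4⟩ := ih
    have hgh : g ≠ h := by rintro rfl; simp [hh] at i3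
    obtain ⟨j1, j2, j3⟩ := i1
    refine ⟨⟨?_, ?_, ?_⟩, j1 h a hh, by simp, ?_⟩
    · intro w b hw
      simp only [Function.update_apply] at hw
      grind
    · intro w b hw
      simp only [Function.update_apply] at hw
      grind
    · intro v w b hv hw
      simp only [Function.update_apply] at hv hw
      grind
    · rw [← i4]
      ext b
      simp only [used, Set.mem_ofPred_eq, Function.update_apply]
      constructor
      · rintro ⟨v, hv⟩
        by_cases hb : b = a
        · exact ⟨h, hb ▸ hh⟩
        · exact ⟨v, by grind⟩
      · rintro ⟨v, hv⟩
        by_cases hb : b = a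
        · exact ⟨g, by grind⟩
        · exact ⟨v, by grind⟩

theorem PM.extend {V C : Type*} [DecidableEq V] {N : Set V} {D : C → V → V} {φ : V → Option C}
    (hφ : PM N D φ) {g : V} {a : C} (hg : g ∈ N) (hgn : φ g = none) (ha : a ∉ used φ)
    (hag : D a g = g) : PM N D (Function.update φ g (some a)) ∧
      used (Function.update φ g (some a)) = insert a (used φ) := by
  obtain ⟨j1, j2, j3⟩ := hφ
  have ha' : ∀ v, φ v ≠ some a := fun v hv => ha ⟨v, hv⟩
  refine ⟨⟨?_, ?_, ?_⟩, ?_⟩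
  · intro w b hw
    simp only [Function.update_apply] at hw
    grind
  · intro w b hw
    simp only [Function.update_apply] at hw
    grind
  · intro v w b hv hw
    simp only [Function.update_apply] at hv hw
    grind
  · ext b
    simp only [used, Set.mem_ofPred_eq, Function.update_apply, Set.mem_insert_iff]
    constructor
    · rintro ⟨v, hv⟩
      by_cases hb : b = a
      · exact Or.inl hb
      · exact Or.inr ⟨v, by grind⟩
    · rintro (rfl | ⟨v, hv⟩)
      · exact ⟨g, by simp⟩
      · exact ⟨v, by grind⟩

theorem augment {V C : Type*} [Finite V] {G : SimpleGraph V} {S : Finset V} {N : Set V}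
    {D : C → V → V} {φ : V → Option C} (hD : Col G S D) (hφ : PM N D φ) {f : V} (hf : f ∈ N)
    (hff : φ f = none) (α : C) (hα : α ∉ used φ)
    (hm : ∀ w ∈ N, ∃ a, D a w = w ∧ φ w ≠ some a) :
    ∃ (D' : C → V → V) (φ' : V → Option C) (a : C), Col G S D' ∧ PM N D' φ' ∧
      a ∉ used φ ∧ used φ' = insert a (used φ) := by
  classical
  by_contra hcon
  have h1 : ∀ ψ g, St D φ f ψ g → ∀ a, D a g = g → a ∈ used φ := by
    intro ψ g hs a ha
    by_contra hau
    obtain ⟨i1, i2, i3, i4⟩ := hs.inv hφ hf hff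
    obtain ⟨e1, e2⟩ := i1.extend i2 i3 (i4 ▸ hau) ha
    exact hcon ⟨D, _, a, hD, e1, hau, by rw [e2, i4]⟩
  have h2 : ∀ ψ g, St D φ f ψ g → ∀ β h, D β g = g → ψ h = some β →
      Conn (D α) (D β) g h := by
    intro ψ g hs β h hβ hh
    by_contra hnc
    obtain ⟨i1, i2, i3, i4⟩ := hs.inv hφ hf hff
    have hne : α ≠ β := by
      rintro rfl
      exact hα (h1 ψ g hs _ hβ)
    set K : Set V := {v | Conn (D α) (D β) g v} with hK
    have hgK : g ∈ K := Relation.ReflTransGen.refl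
    have hc1 : ∀ v, v ∈ K → D α v ∈ K := fun v hv =>
      Relation.ReflTransGen.tail hv (Or.inl rfl)
    have hc2 : ∀ v, v ∈ K → D β v ∈ K := fun v hv =>
      Relation.ReflTransGen.tail hv (Or.inr rfl)
    have hD' : Col G S (swapD D α β K) := by
      refine hD.kempe α β K (fun v => ⟨hc1 v, fun hv => ?_⟩) (fun v => ⟨hc2 v, fun hv => ?_⟩) hne
      · have := hc1 _ hv; rwa [hD.inv] at this
      · have := hc2 _ hv; rwa [hD.inv] at this
    have hψ' : PM N (swapD D α β K) ψ := by
      refine ⟨i1.mem, ?_, i1.inj⟩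
      intro w a hw
      have hDw := i1.mis w a hw
      have haα : a ≠ α := by
        rintro rfl
        exact hα (i4 ▸ ⟨w, hw⟩)
      unfold swapD
      by_cases haβ : a = β
      · subst haβ
        have : w = h := i1.inj _ _ _ hw hh
        subst this
        have hwK : w ∉ K := hnc
        rw [if_neg hwK, hDw]
      · rw [Equiv.swap_apply_of_ne_of_ne haα haβ]
        simp [hDw]
    have hg' : swapD D α β K α g = g := by
      unfold swapD
      rw [if_pos hgK, Equiv.swap_apply_left, hβ]
    obtain ⟨e1, e2⟩ := hψ'.extend i2 i3 (i4 ▸ hα) hg'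
    exact hcon ⟨_, _, α, hD', e1, hα, by rw [e2, i4]⟩
  have h3 : ∀ β h0, φ h0 = some β → ∀ ψ g, St D φ f ψ g → ∀ h, ψ h = some β →
      Conn (D α) (D β) h0 h := by
    intro β h0 hh0 ψ g hs
    induction hs with
    | base =>
      intro h hh
      rw [hφ.inj _ _ _ hh hh0]
      exact Relation.ReflTransGen.refl
    | step ψ g h a hs ha hh ih =>
      intro h' hh'
      have n1 : h' ≠ h := by
        rintro rfl
        simp at hh'
      rw [Function.update_of_ne n1] at hh'
      by_cases n2 : h' = g
      · subst n2
        simp only [Function.update_self, Option.some.injEq] at hh'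
        subst hh'
        exact Relation.ReflTransGen.trans (ih h hh)
          (Conn.symm' (hD.inv α) (hD.inv a) (h2 ψ h' hs a h ha hh))
      · rw [Function.update_of_ne n2] at hh'
        exact ih h' hh'
  set W : Set V := {w | ∃ ψ, St D φ f ψ w} with hW
  have h5 : ∀ v a, v ∉ W → φ v = some a → ∀ ψ g, St D φ f ψ g → ψ v = some a := by
    intro v a hv hva ψ g hs
    induction hs with
    | base => exact hva
    | step ψ g h b hs hb hh ih =>
      have n1 : v ≠ h := by
        rintro rfl
        exact hv ⟨_, St.step ψ g _ b hs hb hh⟩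
      have n2 : v ≠ g := by
        rintro rfl
        exact hv ⟨_, hs⟩
      rw [Function.update_of_ne n1, Function.update_of_ne n2]
      exact ih
  have h6 : ∀ w : W, ∃ h : W, ∃ a, D a w = w ∧ φ w ≠ some a ∧ φ h = some a := by
    rintro ⟨w, ψ, hs⟩
    obtain ⟨i1, i2, i3, i4⟩ := hs.inv hφ hf hff
    obtain ⟨a, ha, hna⟩ := hm w i2
    obtain ⟨h, hh⟩ := h1 ψ w hs a ha
    have hhW : h ∈ W := by
      by_contra hhW
      have := h5 h a hhW hh ψ w hs
      exact hhW ⟨_, St.step ψ w h a hs ha this⟩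
    exact ⟨⟨h, hhW⟩, a, ha, hna, hh⟩
  choose H m hm1 hm2 hm3 using h6
  have hni : ¬ Function.Injective H := by
    intro hi
    obtain ⟨w, hw⟩ := Finite.surjective_of_injective hi ⟨f, φ, St.base⟩
    have := hm3 w
    rw [hw] at this
    simp [hff] at this
  have h7 : ∀ w : W, Conn (D α) (D (m w)) (H w) w := by
    intro w
    obtain ⟨ψ, hs⟩ := w.2
    obtain ⟨i1, i2, i3, i4⟩ := hs.inv hφ hf hff
    have : m w ∈ used ψ := i4 ▸ ⟨_, hm3 w⟩
    obtain ⟨u, hu⟩ := this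
    exact Relation.ReflTransGen.trans (h3 _ _ (hm3 w) ψ w hs u hu)
          (Conn.symm' (hD.inv _) (hD.inv _) (h2 ψ w hs _ u (hm1 w) hu))
  simp only [Function.Injective, not_forall] at hni
  obtain ⟨w1, w2, he, hne⟩ := hni
  have hmm : m w1 = m w2 := by
    have a1 := hm3 w1
    have a2 := hm3 w2
    rw [he, a2] at a1
    exact (Option.some.inj a1).symm
  have c1 := h7 w1
  have c2 := h7 w2
  have d1 := hm1 w1
  have d2 := hm1 w2
  have e1 := hm2 w1
  have e2 := hm2 w2
  have g1 := hm3 w1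
  rw [← hmm] at c2 d2 e2
  rw [← he] at c2
  refine no_three (hD.inv α) (hD.inv (m w1)) (hφ.mis _ _ g1) d1 d2 ?_ ?_ ?_ c1 c2
  · intro h; rw [h] at g1; exact e1 g1
  · intro h; rw [h] at g1; exact e2 g1
  · exact fun h => hne (Subtype.ext h)

theorem extendCol {V C : Type*} {G : SimpleGraph V} {S : Finset V} [DecidableEq V]
    {D : C → V → V} {φ : V → Option C} {x : V} (hx : x ∉ S) (hD : Col G S D)
    (hφ : PM {w | w ∈ S ∧ G.Adj x w} D φ) (hfull : ∀ w ∈ S, G.Adj x w → φ w ≠ none) :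
    ∃ D' : C → V → V, Col G (insert x S) D' := by
  classical
  have : ∀ a, ∃ h, φ h = some a ∨ (h = x ∧ ∀ v, φ v ≠ some a) := by
    intro a
    by_cases h : ∃ v, φ v = some a
    · exact ⟨h.choose, Or.inl h.choose_spec⟩
    · exact ⟨x, Or.inr ⟨rfl, fun v hv => h ⟨v, hv⟩⟩⟩
  choose hold hh using this
  obtain ⟨j1, j2, j3⟩ := hφ
  have hDx : ∀ a, D a x = x := fun a => by
    by_contra h
    exact hx (hD.mem a x h)
  have hDx' : ∀ a v, v ≠ x → D a v ≠ x := by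
    intro a v hv h
    have := hD.inv a v
    rw [h, hDx] at this
    exact hv this.symm
  have hDh : ∀ a, D a (hold a) = hold a := by
    intro a
    rcases hh a with h | ⟨h, _⟩
    · exact j2 _ _ h
    · rw [h, hDx]
  have hDh' : ∀ a v, v ≠ hold a → D a v ≠ hold a := by
    intro a v hv h
    have := hD.inv a v
    rw [h, hDh] at this
    exact hv this.symm
  have hhx : ∀ a, hold a ≠ x → φ (hold a) = some a ∧ hold a ∈ S ∧ G.Adj x (hold a) := by
    intro a ha
    rcases hh a with h | ⟨h, _⟩
    · exact ⟨h, j1 _ _ h⟩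
    · exact absurd h ha
  have hhu : ∀ v a, φ v = some a → hold a = v := by
    intro v a hv
    rcases hh a with h | ⟨_, h⟩
    · exact j3 _ _ _ h hv
    · exact absurd hv (h v)
  have hinv := hD.inv
  refine ⟨fun a v => if v = hold a then x else if v = x then hold a else D a v,
    ?_, ?_, ?_, ?_, ?_⟩
  · intro a v
    grind
  · intro a v hv
    have := hD.mem a v
    grind
  · intro a v hv
    have := hD.adj a v
    have := hhx a
    have := fun h : hold a ≠ x => (hhx a h).2.2.symm
    grind
  · intro a b v hv hab
    have := hD.uniq a b v
    have := hhx a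
    have := hhx b
    grind
  · intro v w hv hw hvw
    have hne := hvw.ne
    by_cases hvx : v = x
    · subst hvx
      have hwS : w ∈ S := by grind
      obtain ⟨a, ha⟩ := Option.ne_none_iff_exists'.1 (hfull w hwS hvw)
      refine ⟨a, ?_⟩
      have := hhu w a ha
      grind
    · by_cases hwx : w = x
      · subst hwx
        have hvS : v ∈ S := by grind
        obtain ⟨a, ha⟩ := Option.ne_none_iff_exists'.1 (hfull v hvS hvw.symm)
        refine ⟨a, ?_⟩
        have := hhu v a ha
        grind
      · obtain ⟨a, ha⟩ := hD.full v w (by grind) (by grind) hvw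
        refine ⟨a, ?_⟩
        have := hDh a
        grind

theorem exists_missing {V C : Type*} [Fintype V] [Fintype C] {G : SimpleGraph V}
    [DecidableRel G.Adj] (hdeg : ∀ v, G.degree v < Fintype.card C) {S : Finset V}
    {D : C → V → V} {x : V} (hx : x ∉ S) (hD : Col G S D) (w : V) (hw : G.Adj x w)
    (o : Option C) : ∃ a, D a w = w ∧ o ≠ some a := by
  classical
  by_contra! hcon
  -- all colors but `o` are present at `w`
  have hinj : ∃ F : C → V, Function.Injective F ∧ ∀ a, G.Adj w (F a) := by
    have hDx : ∀ a, D a w ≠ x := by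
      intro a ha
      have h1 := hD.inv a w
      rw [ha] at h1
      exact hx (hD.mem a x (by rw [h1]; exact hw.ne'))
    refine ⟨fun a => if D a w = w then x else D a w, ?_, ?_⟩
    · intro a b hab
      by_cases ha : D a w = w <;> by_cases hb : D b w = w <;> simp only [ha, hb, if_true, if_false] at hab
      · have := hcon a ha
        have := hcon b hb
        simp_all
      · exact absurd hab.symm (hDx b)
      · exact absurd hab (hDx a)
      · exact hD.uniq a b w ha hab
    · intro a
      by_cases ha : D a w = w
      · simp [ha, hw.symm]
      · simpa [ha] using hD.adj a w ha
  obtain ⟨F, hF, hFa⟩ := hinj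
  have := Finset.card_le_card_of_injOn (s := Finset.univ) (t := G.neighborFinset w) F
    (by intro a _; simpa using hFa a) hF.injOn
  rw [SimpleGraph.card_neighborFinset_eq_degree, Finset.card_univ] at this
  have := hdeg w
  omega

theorem exists_unused {V C : Type*} [Fintype V] [Fintype C] {G : SimpleGraph V}
    [DecidableRel G.Adj] (hdeg : ∀ v, G.degree v < Fintype.card C) {S : Finset V}
    {D : C → V → V} {φ : V → Option C} {x : V} (hφ : PM {w | w ∈ S ∧ G.Adj x w} D φ) :
    ∃ α, α ∉ used φ := by
  classical
  by_contra! hcon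
  choose F hF using hcon
  have := Finset.card_le_card_of_injOn (s := Finset.univ) (t := G.neighborFinset x) F
    (by intro a _; simpa using (hφ.mem _ _ (hF a)).2)
    (by intro a _ b _ hab
        have h1 := hF a
        rw [hab, hF b] at h1
        exact (Option.some.inj h1).symm)
  rw [SimpleGraph.card_neighborFinset_eq_degree, Finset.card_univ] at this
  have := hdeg x
  omega

theorem exists_col {V C : Type*} [Fintype V] [Fintype C] (G : SimpleGraph V)
    [DecidableRel G.Adj] (hdeg : ∀ v, G.degree v < Fintype.card C) (S : Finset V) :
    ∃ D : C → V → V, Col G S D := by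
  classical
  induction S using Finset.induction_on with
  | empty => exact ⟨fun _ v => v, by constructor <;> simp⟩
  | insert x S hx ih =>
    obtain ⟨D, hD⟩ := ih
    suffices h : ∀ n : ℕ, ∀ (D : C → V → V) (φ : V → Option C), Col G S D →
        PM {w | w ∈ S ∧ G.Adj x w} D φ → (used φ)ᶜ.ncard = n →
        ∃ D' : C → V → V, Col G (insert x S) D' from
      h _ D (fun _ => none) hD (by constructor <;> simp) rfl
    intro n
    induction n using Nat.strong_induction_on with
    | _ n ihn =>
      intro D φ hD hφ hn
      by_cases hfull : ∀ w ∈ S, G.Adj x w → φ w ≠ none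
      · exact extendCol hx hD hφ hfull
      · push Not at hfull
        obtain ⟨f, hfS, hfx, hff⟩ := hfull
        obtain ⟨α, hα⟩ := exists_unused hdeg hφ
        obtain ⟨D', φ', a, hD', hφ', ha, hu⟩ := augment hD hφ (f := f) ⟨hfS, hfx⟩ hff α hα
          (fun w hw => exists_missing hdeg hx hD w hw.2 (φ w))
        refine ihn _ ?_ D' φ' hD' hφ' rfl
        rw [← hn, hu]
        apply Set.ncard_lt_ncard _ (Set.toFinite _)
        refine compl_lt_compl_iff_lt.2 ?_
        exact Set.ssubset_insert ha

end VizingAux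

/-- Vizing's theorem: every simple graph with maximum degree `Δ` admits a proper edge
coloring with at most `Δ + 1` colors. -/
theorem vizing {V : Type*} [Fintype V] (G : SimpleGraph V) [DecidableRel G.Adj] :
    ∃ C : G.edgeSet → Fin (G.maxDegree + 1),
      ∀ e f : G.edgeSet, e ≠ f →
        (∃ v : V, v ∈ (e : Sym2 V) ∧ v ∈ (f : Sym2 V)) → C e ≠ C f := by
  obtain ⟨D, hD⟩ := VizingAux.exists_col (C := Fin (G.maxDegree + 1)) G
    (fun v => by simpa using Nat.lt_succ_of_le (G.degree_le_maxDegree v)) Finset.univ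
  have : ∀ e : G.edgeSet, ∃ a, ∀ v w, (e : Sym2 V) = s(v, w) → D a v = w := by
    rintro ⟨e, he⟩
    induction e using Sym2.ind with
    | _ x y =>
      obtain ⟨a, ha⟩ := hD.full x y (Finset.mem_univ _) (Finset.mem_univ _) he
      refine ⟨a, fun v w hvw => ?_⟩
      rcases Sym2.eq_iff.1 hvw with ⟨rfl, rfl⟩ | ⟨rfl, rfl⟩
      · exact ha
      · rw [← ha, hD.inv]
  choose c hc using this
  refine ⟨c, ?_⟩
  rintro e f hef ⟨v, hve, hvf⟩ h
  obtain ⟨w, hw⟩ := hve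
  obtain ⟨w', hw'⟩ := hvf
  apply hef
  apply Subtype.ext
  rw [hw, hw', ← hc e v w hw, ← hc f v w' hw', h]
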